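/- Nonsingularity of the canonical model of a Howe curve (key step in the proof of Proposition 2.1): Let k be an algebraically closed field of characteristic p > 3, let A₁, B₁, A₂, B₂ ∈ k satisfy 4A_i³ + 27B_i² ≠ 0 for i = 1, 2, and let (λ, μ, ν) ∈ k³ be of Howe type, i.e., μ ≠ 0, ν ≠ 0, and the polynomials f₁(x) = x³ + A₁μ²x + B₁μ³ and f₂(x) = (x−λ)³ + A₂ν²(x−λ) + B₂ν³ are coprime in k[x]. Then for every point (x₀, y₀, z₀, w₀) ∈ k⁴ ∖ {(0,0,0,0)} with Q(x₀,y₀,z₀,w₀) = 0 and P(x₀,y₀,z₀,w₀) = 0, the 2×4 matrix whose rows are the gradients (∂Q/∂x, ∂Q/∂y, ∂Q/∂z, ∂Q/∂w) and (∂P/∂x, ∂P/∂y, ∂P/∂z, ∂P/∂w) evaluated at (x₀,y₀,z₀,w₀) has rank 2. (In other words, the projective curve H' = V(Q, P) ⊂ P³ is nonsingular.) -/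

import Mathlib

open MvPolynomial

/-- `f₁ʰ(x,y) = x³ + A₁μ²xy² + B₁μ³y³ ∈ k[x,y,z,w]`, with `x = X 0`, `y = X 1`. -/
noncomputable def f1h {k : Type*} [CommRing k] (A₁ B₁ mu : k) : MvPolynomial (Fin 4) k :=
  X 0 ^ 3 + C (A₁ * mu ^ 2) * X 0 * X 1 ^ 2 + C (B₁ * mu ^ 3) * X 1 ^ 3

/-- `f₂ʰ(x,y) = (x−λy)³ + A₂ν²(x−λy)y² + B₂ν³y³ ∈ k[x,y,z,w]`, with `x = X 0`, `y = X 1`. -/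
noncomputable def f2h {k : Type*} [CommRing k] (A₂ B₂ lam nu : k) : MvPolynomial (Fin 4) k :=
  (X 0 - C lam * X 1) ^ 3 + C (A₂ * nu ^ 2) * (X 0 - C lam * X 1) * X 1 ^ 2
    + C (B₂ * nu ^ 3) * X 1 ^ 3

/-!
Put `R = P - y Q = w² y - f₂ʰ`. Where `y ≠ 0` the gradients of `Q` and `P` span the same plane as
those of `P` and `R`, since `∇R = ∇P - y ∇Q` on `Q = 0`. Now `P` and `R` are the cubics of the two
elliptic curves, sharing the coordinates `x, y`: the `z`-entry of `∇P` is `2zy` while that of `∇R`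
is `0`, and symmetrically for `w`. Coprimality of `f₁, f₂` excludes `z = w = 0`, and separability of
`fᵢ` makes the `x`-entry nonzero as soon as `z = 0`, respectively `w = 0`. Where `y = 0` also
`x = 0`, `∇P` is `(0, z², 0, 0)`, and the `z`-entry `2z` of `∇Q` is nonzero.
-/

section Gradient

variable {σ R : Type*} [CommSemiring R]

/-- The gradient of a polynomial at a point, as the vector of its evaluated partial derivatives. -/
noncomputable def gradientAt (v : σ → R) (F : MvPolynomial σ R) : σ → R :=
  fun j => eval v (pderiv j F)

theorem gradientAt_mul_of_eval_eq_zero {v : σ → R} {F : MvPolynomial σ R}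
    (G : MvPolynomial σ R) (hF : eval v F = 0) :
    gradientAt v (G * F) = eval v G • gradientAt v F := by
  ext j
  simp [gradientAt, hF]

theorem gradientAt_sub {R : Type*} [CommRing R] (v : σ → R) (F G : MvPolynomial σ R) :
    gradientAt v (F - G) = gradientAt v F - gradientAt v G := by
  ext j
  simp [gradientAt]

end Gradient

section DepressedCubic

variable {R : Type*} [CommRing R]

/-- The cubic `(x - r)³ + a (x - r) + b`; both `f₁` (with `r = 0`) and `f₂` have this shape. -/
noncomputable def depressedCubic (r a b : R) : Polynomial R :=
  (Polynomial.X - Polynomial.C r) ^ 3 + Polynomial.C a * (Polynomial.X - Polynomial.C r)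
    + Polynomial.C b

theorem derivative_depressedCubic (r a b : R) :
    (depressedCubic r a b).derivative =
      3 * (Polynomial.X - Polynomial.C r) ^ 2 + Polynomial.C a := by
  simp [depressedCubic, Polynomial.derivative_pow, Polynomial.C_ofNat]

theorem separable_depressedCubic (r : R) {a b : R} (hab : IsUnit (4 * a ^ 3 + 27 * b ^ 2)) :
    (depressedCubic r a b).Separable := by
  obtain ⟨d, hd⟩ := hab.exists_left_inv
  have hdisc := congrArg Polynomial.C hd
  simp only [map_mul, map_add, map_pow, map_one, Polynomial.C_ofNat] at hdisc
  rw [Polynomial.separable_def', derivative_depressedCubic, depressedCubic]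
  set t : Polynomial R := Polynomial.X - Polynomial.C r
  set α := Polynomial.C a
  set β := Polynomial.C b
  set δ := Polynomial.C d
  -- The Euclidean algorithm on `t³ + αt + β` and `3t² + α`, with denominators cleared.
  refine ⟨δ * (27 * β - 18 * α * t), δ * (6 * α * t ^ 2 - 9 * β * t + 4 * α ^ 2), ?_⟩
  linear_combination hdisc

end DepressedCubic

section HowePencil

variable {k : Type*} [CommRing k] {F G q : MvPolynomial (Fin 4) k} {v : Fin 4 → k}

/-- The cubic `t² y - F` for `t = X i`, which for a binary form `F(x, y)` cuts out the double cover
of the `(x : y)`-line branched along `y F = 0`. -/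
noncomputable def doubleCover (i : Fin 4) (F : MvPolynomial (Fin 4) k) : MvPolynomial (Fin 4) k :=
  X i ^ 2 * X 1 - F

theorem gradientAt_doubleCover_self {i : Fin 4} (hi : 1 ≠ i) (hF : pderiv i F = 0) :
    gradientAt v (doubleCover i F) i = v 1 * (2 * v i) := by
  simp [gradientAt, doubleCover, pderiv_X_of_ne hi, hF]

theorem gradientAt_doubleCover_of_ne {i j : Fin 4} (hi : i ≠ j) (h1 : 1 ≠ j) :
    gradientAt v (doubleCover i F) j = -eval v (pderiv j F) := by
  simp [gradientAt, doubleCover, pderiv_X_of_ne hi, pderiv_X_of_ne h1]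

theorem eval_eq_zero_of_eval_doubleCover_eq_zero {i : Fin 4} (h : eval v (doubleCover i F) = 0)
    (hi : v i = 0) : eval v F = 0 := by
  simpa [doubleCover, hi] using h

theorem doubleCover_sub_X_one_mul (hq : X 1 * q = F - G) :
    doubleCover 2 F - X 1 * (X 2 ^ 2 - X 3 ^ 2 - q) = doubleCover 3 G := by
  rw [doubleCover, doubleCover]
  linear_combination hq

theorem eval_eq_of_X_one_mul_eq_sub (hq : X 1 * q = F - G) (hy : v 1 = 0) :
    eval v q = eval v (pderiv 1 F) - eval v (pderiv 1 G) := by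
  simpa [hy] using congrArg (fun H => eval v (pderiv 1 H)) hq

variable [IsDomain k]

theorem linearIndependent_gradientAt_doubleCover (h2 : (2 : k) ≠ 0) (hy : v 1 ≠ 0)
    (hF2 : pderiv 2 F = 0) (hF3 : pderiv 3 F = 0) (hG2 : pderiv 2 G = 0) (hG3 : pderiv 3 G = 0)
    (hF : eval v F = 0 → eval v (pderiv 0 F) ≠ 0) (hG : eval v G = 0 → eval v (pderiv 0 G) ≠ 0)
    (hFG : eval v F ≠ 0 ∨ eval v G ≠ 0)
    (hP : eval v (doubleCover 2 F) = 0) (hR : eval v (doubleCover 3 G) = 0) :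
    LinearIndependent k ![gradientAt v (doubleCover 2 F), gradientAt v (doubleCover 3 G)] := by
  refine LinearIndependent.pair_iff.mpr fun s t hst => ?_
  have hx : s * eval v (pderiv 0 F) + t * eval v (pderiv 0 G) = 0 := by
    have := congrFun hst 0
    simp only [Pi.add_apply, Pi.smul_apply, Pi.zero_apply, smul_eq_mul, ne_eq, Fin.reduceEq,
      not_false_eq_true, gradientAt_doubleCover_of_ne] at this
    linear_combination -this
  have hz : v 2 ≠ 0 → s = 0 := fun hz0 => by
    simpa [gradientAt_doubleCover_self, gradientAt_doubleCover_of_ne, hF2, hG2, h2, hy, hz0]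
      using congrFun hst 2
  have hw : v 3 ≠ 0 → t = 0 := fun hw0 => by
    simpa [gradientAt_doubleCover_self, gradientAt_doubleCover_of_ne, hF3, hG3, h2, hy, hw0]
      using congrFun hst 3
  have hFz := eval_eq_zero_of_eval_doubleCover_eq_zero hP
  have hGw := eval_eq_zero_of_eval_doubleCover_eq_zero hR
  by_cases hz0 : v 2 = 0
  · have ht : t = 0 := hw fun hw0 => hFG.elim (· (hFz hz0)) (· (hGw hw0))
    have hs : s = 0 := by simpa [ht, hF (hFz hz0)] using hx
    exact ⟨hs, ht⟩
  · have hs : s = 0 := hz hz0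
    refine ⟨hs, ?_⟩
    by_cases hw0 : v 3 = 0
    · simpa [hs, hG (hGw hw0)] using hx
    · exact hw hw0

theorem linearIndependent_gradientAt_of_doubleCover (hq : X 1 * q = F - G)
    (hQ : eval v (X 2 ^ 2 - X 3 ^ 2 - q) = 0)
    (h : LinearIndependent k ![gradientAt v (doubleCover 2 F), gradientAt v (doubleCover 3 G)]) :
    LinearIndependent k
      ![gradientAt v (X 2 ^ 2 - X 3 ^ 2 - q), gradientAt v (doubleCover 2 F)] := by
  rw [← doubleCover_sub_X_one_mul hq, gradientAt_sub, gradientAt_mul_of_eval_eq_zero _ hQ] at h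
  refine LinearIndependent.pair_symm_iff.mp
    (LinearIndependent.pair_add_smul_add_smul_iff 1 0 1 (-eval v (X 1)) |>.mp ?_).1
  simpa [sub_eq_add_neg] using h

theorem pderiv_two_eq_zero_of_X_one_mul_eq_sub (hq : X 1 * q = F - G)
    (hF2 : pderiv 2 F = 0) (hG2 : pderiv 2 G = 0) : pderiv 2 q = 0 := by
  simpa [hF2, hG2, pderiv_X_of_ne (show (1 : Fin 4) ≠ 2 by decide)]
    using congrArg (pderiv 2) hq

theorem linearIndependent_gradientAt_of_y_eq_zero (h2 : (2 : k) ≠ 0) (hy : v 1 = 0)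
    (hz : v 2 ≠ 0) (hF1 : eval v (pderiv 1 F) = 0) (hF2 : pderiv 2 F = 0) (hq2 : pderiv 2 q = 0) :
    LinearIndependent k
      ![gradientAt v (X 2 ^ 2 - X 3 ^ 2 - q), gradientAt v (doubleCover 2 F)] := by
  refine LinearIndependent.pair_iff.mpr fun s t hst => ?_
  have hs : s = 0 := by
    simpa [gradientAt, doubleCover, hF2, hy, hq2, h2, hz,
      pderiv_X_of_ne (show (3 : Fin 4) ≠ 2 by decide),
      pderiv_X_of_ne (show (1 : Fin 4) ≠ 2 by decide)] using congrFun hst 2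
  have ht : t = 0 := by
    simpa [hs, gradientAt, doubleCover, hF1, hy, hz] using congrFun hst 1
  exact ⟨hs, ht⟩

end HowePencil

section HoweForms

section CommRing

variable {k : Type*} [CommRing k] {v : Fin 4 → k}

theorem f1h_eq_f2h_zero (A B m : k) : f1h A B m = f2h A B 0 m := by
  simp [f1h, f2h]

theorem pderiv_f2h_of_ne (A B r m : k) {i : Fin 4} (h0 : 0 ≠ i) (h1 : 1 ≠ i) :
    pderiv i (f2h A B r m) = 0 := by
  simp [f2h, pderiv_X_of_ne h0, pderiv_X_of_ne h1]

theorem eval_f2h (A B r m : k) (v : Fin 4 → k) :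
    eval v (f2h A B r m) =
      (v 0 - r * v 1) ^ 3 + A * m ^ 2 * (v 0 - r * v 1) * v 1 ^ 2 + B * m ^ 3 * v 1 ^ 3 := by
  simp [f2h]

theorem eval_pderiv_zero_f2h (A B r m : k) (v : Fin 4 → k) :
    eval v (pderiv 0 (f2h A B r m)) = 3 * (v 0 - r * v 1) ^ 2 + A * m ^ 2 * v 1 ^ 2 := by
  simp [f2h, pderiv_X_of_ne (show (1 : Fin 4) ≠ 0 by decide), mul_comm]

theorem eval_pderiv_one_f2h_eq_zero (A B r m : k) (hx : v 0 = 0) (hy : v 1 = 0) :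
    eval v (pderiv 1 (f2h A B r m)) = 0 := by
  simp [f2h, hx, hy]

end CommRing

section Field

variable {k : Type*} [Field k] {v : Fin 4 → k}

theorem eval_f2h_eq_mul_eval_depressedCubic (A B r m : k) (hy : v 1 ≠ 0) :
    eval v (f2h A B r m) =
      v 1 ^ 3 * (depressedCubic r (A * m ^ 2) (B * m ^ 3)).eval (v 0 / v 1) := by
  have heval : (depressedCubic r (A * m ^ 2) (B * m ^ 3)).eval (v 0 / v 1) =
      (v 0 / v 1 - r) ^ 3 + A * m ^ 2 * (v 0 / v 1 - r) + B * m ^ 3 := by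
    simp [depressedCubic]
  rw [heval, eval_f2h]
  field_simp

theorem eval_pderiv_zero_f2h_eq_mul_eval_derivative (A B r m : k) (hy : v 1 ≠ 0) :
    eval v (pderiv 0 (f2h A B r m)) =
      v 1 ^ 2 * (depressedCubic r (A * m ^ 2) (B * m ^ 3)).derivative.eval (v 0 / v 1) := by
  have heval : (depressedCubic r (A * m ^ 2) (B * m ^ 3)).derivative.eval (v 0 / v 1) =
      3 * (v 0 / v 1 - r) ^ 2 + A * m ^ 2 := by
    simp [derivative_depressedCubic]
  rw [heval, eval_pderiv_zero_f2h]
  field_simp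

theorem eval_pderiv_zero_f2h_ne_zero {A B m : k} (r : k) (hΔ : 4 * A ^ 3 + 27 * B ^ 2 ≠ 0)
    (hm : m ≠ 0) (hy : v 1 ≠ 0) (hv : eval v (f2h A B r m) = 0) :
    eval v (pderiv 0 (f2h A B r m)) ≠ 0 := by
  have hdisc : 4 * (A * m ^ 2) ^ 3 + 27 * (B * m ^ 3) ^ 2 ≠ 0 := by
    convert mul_ne_zero hΔ (pow_ne_zero 6 hm) using 1
    ring
  rw [eval_f2h_eq_mul_eval_depressedCubic A B r m hy, mul_eq_zero_iff_left (pow_ne_zero 3 hy)] at hv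
  rw [eval_pderiv_zero_f2h_eq_mul_eval_derivative A B r m hy]
  exact mul_ne_zero (pow_ne_zero 2 hy)
    ((separable_depressedCubic r hdisc.isUnit).aeval_derivative_ne_zero hv)

theorem eval_f2h_ne_zero_or_of_isCoprime {A₁ B₁ r₁ m₁ A₂ B₂ r₂ m₂ : k}
    (hcop : IsCoprime (depressedCubic r₁ (A₁ * m₁ ^ 2) (B₁ * m₁ ^ 3))
      (depressedCubic r₂ (A₂ * m₂ ^ 2) (B₂ * m₂ ^ 3))) (hy : v 1 ≠ 0) :
    eval v (f2h A₁ B₁ r₁ m₁) ≠ 0 ∨ eval v (f2h A₂ B₂ r₂ m₂) ≠ 0 := by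
  rw [eval_f2h_eq_mul_eval_depressedCubic _ _ _ _ hy,
    eval_f2h_eq_mul_eval_depressedCubic _ _ _ _ hy]
  exact (Polynomial.aeval_ne_zero_of_isCoprime hcop (v 0 / v 1)).imp
    (mul_ne_zero (pow_ne_zero 3 hy)) (mul_ne_zero (pow_ne_zero 3 hy))

end Field

end HoweForms

theorem x_eq_zero_and_z_ne_zero_of_y_eq_zero {k : Type*} [CommRing k] [IsDomain k]
    {A₁ B₁ r₁ m₁ A₂ B₂ r₂ m₂ : k} {q : MvPolynomial (Fin 4) k} {v : Fin 4 → k}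
    (hq : X 1 * q = f2h A₁ B₁ r₁ m₁ - f2h A₂ B₂ r₂ m₂) (hv : v ≠ 0) (hy : v 1 = 0)
    (hQv : eval v (X 2 ^ 2 - X 3 ^ 2 - q) = 0)
    (hPv : eval v (doubleCover 2 (f2h A₁ B₁ r₁ m₁)) = 0) : v 0 = 0 ∧ v 2 ≠ 0 := by
  have hx : v 0 = 0 := by
    simpa [doubleCover, hy, eval_f2h] using hPv
  have hqv : eval v q = 0 := by
    simp [eval_eq_of_X_one_mul_eq_sub hq hy, eval_pderiv_one_f2h_eq_zero, hx, hy]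
  refine ⟨hx, fun hz => hv ?_⟩
  have hw : v 3 = 0 := by simpa [hqv, hz] using hQv
  ext i
  fin_cases i <;> assumption

theorem howe_canonical_model_nonsingular_general {k : Type*} [Field k] (h2 : (2 : k) ≠ 0)
    {A₁ B₁ A₂ B₂ lam mu nu : k}
    (hΔ₁ : 4 * A₁ ^ 3 + 27 * B₁ ^ 2 ≠ 0) (hΔ₂ : 4 * A₂ ^ 3 + 27 * B₂ ^ 2 ≠ 0)
    (hmu : mu ≠ 0) (hnu : nu ≠ 0)
    (hcop : IsCoprime
      (Polynomial.X ^ 3 + Polynomial.C (A₁ * mu ^ 2) * Polynomial.X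
        + Polynomial.C (B₁ * mu ^ 3) : Polynomial k)
      ((Polynomial.X - Polynomial.C lam) ^ 3
        + Polynomial.C (A₂ * nu ^ 2) * (Polynomial.X - Polynomial.C lam)
        + Polynomial.C (B₂ * nu ^ 3)))
    {q Q P : MvPolynomial (Fin 4) k}
    (hq : X 1 * q = f1h A₁ B₁ mu - f2h A₂ B₂ lam nu)
    (hQ : Q = X 2 ^ 2 - X 3 ^ 2 - q)
    (hP : P = X 2 ^ 2 * X 1 - f1h A₁ B₁ mu)
    {v : Fin 4 → k} (hv : v ≠ 0)
    (hQv : eval v Q = 0) (hPv : eval v P = 0) :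
    (Matrix.of ![fun j : Fin 4 => eval v (pderiv j Q),
        fun j : Fin 4 => eval v (pderiv j P)] : Matrix (Fin 2) (Fin 4) k).rank = 2 := by
  suffices hli : LinearIndependent k ![gradientAt v Q, gradientAt v P] by
    exact hli.rank_matrix (M := Matrix.of ![gradientAt v Q, gradientAt v P])
  rw [f1h_eq_f2h_zero] at hq hP
  change P = doubleCover 2 _ at hP
  subst hQ hP
  have hF2 := pderiv_f2h_of_ne A₁ B₁ 0 mu (i := 2) (by decide) (by decide)
  have hG2 := pderiv_f2h_of_ne A₂ B₂ lam nu (i := 2) (by decide) (by decide)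
  by_cases hy : v 1 = 0
  · obtain ⟨hx, hz⟩ := x_eq_zero_and_z_ne_zero_of_y_eq_zero hq hv hy hQv hPv
    exact linearIndependent_gradientAt_of_y_eq_zero h2 hy hz
      (eval_pderiv_one_f2h_eq_zero _ _ _ _ hx hy) hF2
      (pderiv_two_eq_zero_of_X_one_mul_eq_sub hq hF2 hG2)
  · have hRv : eval v (doubleCover 3 (f2h A₂ B₂ lam nu)) = 0 := by
      rw [← doubleCover_sub_X_one_mul hq, map_sub, map_mul, hPv, hQv, mul_zero, sub_zero]
    have hcop_cubic : IsCoprime (depressedCubic 0 (A₁ * mu ^ 2) (B₁ * mu ^ 3))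
        (depressedCubic lam (A₂ * nu ^ 2) (B₂ * nu ^ 3)) := by
      simpa [depressedCubic] using hcop
    exact linearIndependent_gradientAt_of_doubleCover hq hQv <|
      linearIndependent_gradientAt_doubleCover h2 hy
        hF2 (pderiv_f2h_of_ne _ _ _ _ (by decide) (by decide))
        hG2 (pderiv_f2h_of_ne _ _ _ _ (by decide) (by decide))
        (eval_pderiv_zero_f2h_ne_zero 0 hΔ₁ hmu hy) (eval_pderiv_zero_f2h_ne_zero lam hΔ₂ hnu hy)
        (eval_f2h_ne_zero_or_of_isCoprime hcop_cubic hy) hPv hRv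

/-- Nonsingularity of the canonical model `H' = V(Q, P) ⊂ P³` of a Howe curve: for an
algebraically closed field `k` of characteristic `p > 3`, nonsingular `Eᵢ` and a Howe-type
triple `(λ, μ, ν)`, at every nonzero point of `k⁴` where the quadric
`Q = z² − w² − q(x,y)` (with `y·q = f₁ʰ − f₂ʰ`) and the cubic `P = z²y − f₁ʰ` both
vanish, the `2×4` matrix of their gradients has rank `2`. -/
theorem howe_canonical_model_nonsingular (p : ℕ) (hp : p.Prime) (hp3 : 3 < p)
    (k : Type*) [Field k] [IsAlgClosed k] [CharP k p]
    (A₁ B₁ A₂ B₂ lam mu nu : k)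
    (hΔ₁ : 4 * A₁ ^ 3 + 27 * B₁ ^ 2 ≠ 0) (hΔ₂ : 4 * A₂ ^ 3 + 27 * B₂ ^ 2 ≠ 0)
    (hmu : mu ≠ 0) (hnu : nu ≠ 0)
    (hcop : IsCoprime
      (Polynomial.X ^ 3 + Polynomial.C (A₁ * mu ^ 2) * Polynomial.X
        + Polynomial.C (B₁ * mu ^ 3) : Polynomial k)
      ((Polynomial.X - Polynomial.C lam) ^ 3
        + Polynomial.C (A₂ * nu ^ 2) * (Polynomial.X - Polynomial.C lam)
        + Polynomial.C (B₂ * nu ^ 3)))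
    (q Q P : MvPolynomial (Fin 4) k)
    (hq : X 1 * q = f1h A₁ B₁ mu - f2h A₂ B₂ lam nu)
    (hQ : Q = X 2 ^ 2 - X 3 ^ 2 - q)
    (hP : P = X 2 ^ 2 * X 1 - f1h A₁ B₁ mu)
    (v : Fin 4 → k) (hv : v ≠ 0)
    (hQv : eval v Q = 0) (hPv : eval v P = 0) :
    (Matrix.of ![fun j : Fin 4 => eval v (pderiv j Q),
        fun j : Fin 4 => eval v (pderiv j P)] : Matrix (Fin 2) (Fin 4) k).rank = 2 := by
  have h2 : (2 : k) ≠ 0 := Ring.two_ne_zero (by rw [ringChar.eq k p]; omega)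
  exact howe_canonical_model_nonsingular_general h2 hΔ₁ hΔ₂ hmu hnu hcop hq hQ hP hv hQv hPv
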